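/- Let M : {0,1,2} × {0,1,2} → ℝ be the payoff matrix with M(0,0) = 1, M(i,j) = −12 whenever exactly one of i, j equals 0, and M(i,j) = 0 whenever both i ≠ 0 and j ≠ 0. Then there do not exist functions Q₁, Q₂ : {0,1,2} → ℝ and a mixing function f : ℝ × ℝ → ℝ that is monotone nondecreasing in each argument such that f(Q₁(i), Q₂(j)) = M(i,j) for all i, j ∈ {0,1,2}. -/

import Mathlib

/-- The nonmonotonic matrix game of Table 1(a): the payoff matrix with
`M 0 0 = 1`, `M i j = -12` when exactly one of `i, j` is `0`, and `M i j = 0`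
when both are nonzero, cannot be represented as `f (Q₁ i) (Q₂ j)` with a
mixing function `f` monotone nondecreasing in each argument. -/
theorem stmt_8
    (M : Fin 3 → Fin 3 → ℝ)
    (h00 : M 0 0 = 1)
    (hone : ∀ i j : Fin 3, ((i = 0 ∧ j ≠ 0) ∨ (i ≠ 0 ∧ j = 0)) → M i j = -12)
    (hboth : ∀ i j : Fin 3, i ≠ 0 → j ≠ 0 → M i j = 0) :
    ¬ ∃ (Q₁ Q₂ : Fin 3 → ℝ) (f : ℝ → ℝ → ℝ),
        (∀ x x' y : ℝ, x ≤ x' → f x y ≤ f x' y) ∧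
        (∀ x y y' : ℝ, y ≤ y' → f x y ≤ f x y') ∧
        (∀ i j : Fin 3, f (Q₁ i) (Q₂ j) = M i j) := by
  rintro ⟨Q₁, Q₂, f, hmono, -, hf⟩
  have h10 : M 1 0 = -12 := hone 1 0 (by decide)
  have h01 : M 0 1 = -12 := hone 0 1 (by decide)
  have h11 : M 1 1 = 0 := hboth 1 1 (by decide) (by decide)
  -- The rows `0` and `1` of `M` would have to be comparable entrywise, but moving from row `0` to
  -- row `1` decreases the entry in column `0` and increases the entry in column `1`.
  rcases le_total (Q₁ 0) (Q₁ 1) with h | h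
  · have := hmono _ _ (Q₂ 0) h
    rw [hf, hf, h00, h10] at this
    linarith
  · have := hmono _ _ (Q₂ 1) h
    rw [hf, hf, h11, h01] at this
    linarith
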